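/- Maximality of the Boltzmann–von Neumann likelihood operator in expectation: let ρ : ℝ → M_n(ℂ) be a differentiable family of positive definite Hermitian matrices and H : ℝ → M_n(ℂ) a differentiable family of Hermitian matrices such that for all θ, ρ'(θ) = ∫₀¹ ρ(θ)^t H(θ) ρ(θ)^{1−t} dt and Tr(ρ(θ)H(θ)) = 0. Then for every θ, Tr(ρ(θ)H'(θ)) = −∫₀¹ Tr(ρ(θ)^t H(θ) ρ(θ)^{1−t} H(θ)) dt; in particular the expectation Tr(ρH') equals −I(θ) ≤ 0 where I(θ) = ∫₀¹ Tr(ρ^t H ρ^{1−t} H) dt is the quantum Fisher information in the Boltzmann–von Neumann model. -/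

import Mathlib

open Matrix
open scoped ComplexOrder

/-- The `s`-th power `ρ^s` of a positive definite matrix `ρ`, defined spectrally. -/
noncomputable def mpow {n : ℕ} {ρ : Matrix (Fin n) (Fin n) ℂ} (hρ : ρ.PosDef)
    (s : ℝ) : Matrix (Fin n) (Fin n) ℂ :=
  hρ.1.cfc fun x : ℝ => x ^ s

lemma mpow_eq {n : ℕ} {ρ : Matrix (Fin n) (Fin n) ℂ} (hρ : ρ.PosDef) (s : ℝ) :
    mpow hρ s = (hρ.1.eigenvectorUnitary : Matrix (Fin n) (Fin n) ℂ) *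
      diagonal (fun i => ((hρ.1.eigenvalues i ^ s : ℝ) : ℂ)) *
      (hρ.1.eigenvectorUnitary : Matrix (Fin n) (Fin n) ℂ)ᴴ := by
  rfl

lemma mpow_continuous {n : ℕ} {ρ : Matrix (Fin n) (Fin n) ℂ} (hρ : ρ.PosDef) :
    Continuous (fun s => mpow hρ s) := by
  simp only [mpow_eq]
  refine (continuous_const.matrix_mul (Continuous.matrix_diagonal ?_)).matrix_mul continuous_const
  refine continuous_pi fun i => Complex.continuous_ofReal.comp ?_
  exact Real.continuous_const_rpow (hρ.eigenvalues_pos i).ne'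

lemma diag_nonneg' {n : ℕ} {ρ : Matrix (Fin n) (Fin n) ℂ} (hρ : ρ.PosDef) (s : ℝ) (i : Fin n) :
    (0 : ℂ) ≤ ((hρ.1.eigenvalues i ^ s : ℝ) : ℂ) := by
  rw [Complex.zero_le_real]
  exact Real.rpow_nonneg (hρ.eigenvalues_pos i).le s

lemma mpow_posSemidef {n : ℕ} {ρ : Matrix (Fin n) (Fin n) ℂ} (hρ : ρ.PosDef) (s : ℝ) :
    (mpow hρ s).PosSemidef := by
  rw [mpow_eq]
  exact (posSemidef_diagonal_iff.2 (diag_nonneg' hρ s)).mul_mul_conjTranspose_same _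

lemma trace_mpow_mul_nonneg {n : ℕ} {ρ X : Matrix (Fin n) (Fin n) ℂ} (hρ : ρ.PosDef) (s : ℝ)
    (hX : X.PosSemidef) : 0 ≤ (mpow hρ s * X).trace := by
  rw [mpow_eq, Matrix.mul_assoc, Matrix.mul_assoc, Matrix.trace_mul_comm, Matrix.mul_assoc]
  rw [Matrix.trace]
  refine Finset.sum_nonneg fun i _ => ?_
  rw [Matrix.diag_apply, Matrix.diagonal_mul]
  exact mul_nonneg (diag_nonneg' hρ s i) (hX.conjTranspose_mul_mul_same _).diag_nonneg

/-- Maximality of the Boltzmann–von Neumann likelihood operator in expectation: let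
`ρ : ℝ → Mₙ(ℂ)` be a differentiable family of positive definite Hermitian matrices and
`H : ℝ → Mₙ(ℂ)` a differentiable family of Hermitian matrices with
`ρ'(θ) = ∫₀¹ ρ(θ)^t H(θ) ρ(θ)^{1−t} dt` and `Tr(ρ(θ)H(θ)) = 0` for all `θ`.
Then `Tr(ρ(θ)H'(θ)) = −∫₀¹ Tr(ρ(θ)^t H(θ) ρ(θ)^{1−t} H(θ)) dt`; in particular
`Re Tr(ρ(θ)H'(θ)) = −I(θ) ≤ 0` where `I(θ)` is the Boltzmann–von Neumann quantum
Fisher information. -/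
theorem bvn_likelihood_maximality {n : ℕ}
    (ρ ρ' H H' : ℝ → Matrix (Fin n) (Fin n) ℂ)
    (hρ : ∀ θ, (ρ θ).PosDef)
    (hρderiv : ∀ i j θ, HasDerivAt (fun t => ρ t i j) (ρ' θ i j) θ)
    (hH : ∀ θ, (H θ).IsHermitian)
    (hHderiv : ∀ i j θ, HasDerivAt (fun t => H t i j) (H' θ i j) θ)
    (hkmb : ∀ (θ : ℝ) (i j : Fin n),
      ρ' θ i j = ∫ t in (0 : ℝ)..1, (mpow (hρ θ) t * H θ * mpow (hρ θ) (1 - t)) i j)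
    (hexp : ∀ θ, (ρ θ * H θ).trace = 0) :
    ∀ θ : ℝ,
      (ρ θ * H' θ).trace =
        -∫ t in (0 : ℝ)..1, (mpow (hρ θ) t * H θ * mpow (hρ θ) (1 - t) * H θ).trace ∧
      ((ρ θ * H' θ).trace).re ≤ 0 := by
  intro θ
  set F : ℝ → Matrix (Fin n) (Fin n) ℂ :=
    fun t => mpow (hρ θ) t * H θ * mpow (hρ θ) (1 - t) with hF
  have hFc : Continuous F :=
    ((mpow_continuous (hρ θ)).matrix_mul continuous_const).matrix_mul
      ((mpow_continuous (hρ θ)).comp (continuous_const.sub continuous_id))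
  have hder : (ρ' θ * H θ).trace + (ρ θ * H' θ).trace = 0 := by
    have h1 : HasDerivAt (fun t => (ρ t * H t).trace)
        ((ρ' θ * H θ).trace + (ρ θ * H' θ).trace) θ := by
      simp only [Matrix.trace, Matrix.diag_apply, Matrix.mul_apply, ← Finset.sum_add_distrib]
      refine HasDerivAt.fun_sum fun i _ => HasDerivAt.fun_sum fun j _ => ?_
      exact (hρderiv i j θ).mul (hHderiv j i θ)
    have h2 : (fun t => (ρ t * H t).trace) = fun _ => 0 := funext hexp
    rw [h2] at h1
    exact h1.unique (hasDerivAt_const θ 0)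
  have hint : ∫ t in (0 : ℝ)..1, (F t * H θ).trace = (ρ' θ * H θ).trace := by
    have hc : ∀ i j, Continuous fun t => F t i j := fun i j => hFc.matrix_elem i j
    simp only [Matrix.trace, Matrix.diag_apply, Matrix.mul_apply]
    rw [intervalIntegral.integral_finsetSum]
    · refine Finset.sum_congr rfl fun i _ => ?_
      rw [intervalIntegral.integral_finsetSum]
      · refine Finset.sum_congr rfl fun j _ => ?_
        rw [intervalIntegral.integral_mul_const, hkmb θ i j]
      · exact fun j _ => ((hc i j).mul continuous_const).intervalIntegrable _ _
    · exact fun i _ => (continuous_finsetSum _ fun j _ =>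
        (hc i j).mul continuous_const).intervalIntegrable _ _
  have heq : (ρ θ * H' θ).trace = -∫ t in (0 : ℝ)..1, (F t * H θ).trace := by
    rw [hint]; exact eq_neg_of_add_eq_zero_right hder
  refine ⟨heq, ?_⟩
  have hnn : ∀ t, 0 ≤ (F t * H θ).trace := by
    intro t
    have := trace_mpow_mul_nonneg (hρ θ) t
      ((mpow_posSemidef (hρ θ) (1 - t)).mul_mul_conjTranspose_same (H θ))
    rw [(hH θ).eq] at this
    simpa only [hF, Matrix.mul_assoc] using this
  have hre : ∀ t, (F t * H θ).trace = (((F t * H θ).trace.re : ℝ) : ℂ) := fun t =>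
    Complex.ext rfl (by simpa using (Complex.le_def.1 (hnn t)).2.symm)
  rw [heq, intervalIntegral.integral_congr (fun t _ => hre t), intervalIntegral.integral_ofReal,
    Complex.neg_re, Complex.ofReal_re, neg_nonpos]
  exact intervalIntegral.integral_nonneg zero_le_one fun t _ => (Complex.le_def.1 (hnn t)).1
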